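/- Assume F ∈ C¹(ℝ,ℝ) with F(0) = 0, F(x) > 0 for all x ≠ 0, and F′(x) = O(1/|log x|) as x → 0⁺. Then there exists ε₂* > 0 such that for every ε ≥ ε₂* the self-consistent system has at least two acims: Lebesgue measure λ satisfies (T_λ^ε)_*λ = λ, and there exists a probability measure μ on [0,1] with μ ≪ λ, λ ≪ μ and μ ≠ λ such that (T_μ^ε)_*μ = μ. -/

import Mathlib

open MeasureTheory

/-- Lebesgue measure on the interval `[0,1]`. -/
noncomputable def lebI : Measure ℝ := volume.restrict (Set.Icc 0 1)

/-- `E_μ = ∫₀¹ x dμ(x)`. -/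
noncomputable def Emu (μ : Measure ℝ) : ℝ := ∫ x in Set.Icc (0:ℝ) 1, x ∂μ

/-- The self-consistent dynamics `T_μ^ε(x) = (2 + ε F(1/E_μ − 2)) x mod 1`. -/
noncomputable def Tsc (ε : ℝ) (F : ℝ → ℝ) (μ : Measure ℝ) (x : ℝ) : ℝ :=
  Int.fract ((2 + ε * F (1 / Emu μ - 2)) * x)

open Filter Topology

/-- greedy orbit of `1` -/
noncomputable def ga (β : ℝ) : ℕ → ℝ
  | 0 => 1
  | n + 1 => Int.fract (β * ga β n)

/-- quasi-greedy orbit of `1` -/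
noncomputable def qa (β : ℝ) : ℕ → ℝ
  | 0 => 1
  | n + 1 => β * qa β n - (⌈β * qa β n⌉ - 1)

noncomputable def SS (β : ℝ) (a : ℕ → ℝ) (p : ℕ) : ℝ := ∑' n, (β⁻¹) ^ n * a n ^ p

lemma ga_mem (β : ℝ) (n : ℕ) : 0 ≤ ga β n ∧ ga β n ≤ 1 := by
  cases n with
  | zero => simp [ga]
  | succ n => exact ⟨Int.fract_nonneg _, (Int.fract_lt_one _).le⟩

lemma qa_mem (β : ℝ) (n : ℕ) : 0 ≤ qa β n ∧ qa β n ≤ 1 := by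
  cases n with
  | zero => simp [qa]
  | succ n =>
    have h1 := Int.le_ceil (β * qa β n)
    have h2 := Int.ceil_lt_add_one (β * qa β n)
    simp only [qa]
    constructor <;> linarith

lemma term_bound {β c : ℝ} (hc : 0 < c) (hβ : c ≤ β) {x : ℝ} (hx : 0 ≤ x ∧ x ≤ 1) (p n : ℕ) :
    ‖(β⁻¹) ^ n * x ^ p‖ ≤ (c⁻¹) ^ n := by
  have hb : 0 < β := hc.trans_le hβ
  have h0 : 0 ≤ β⁻¹ := by positivity
  have h1 : β⁻¹ ≤ c⁻¹ := by gcongr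
  have h2 : x ^ p ≤ 1 := pow_le_one₀ hx.1 hx.2
  have h3 : 0 ≤ x ^ p := pow_nonneg hx.1 _
  rw [Real.norm_of_nonneg (by positivity)]
  calc (β⁻¹) ^ n * x ^ p ≤ (c⁻¹) ^ n * 1 := by gcongr
    _ = _ := by ring

lemma geo_summable {c : ℝ} (hc : 1 < c) : Summable fun n : ℕ => (c⁻¹) ^ n :=
  summable_geometric_of_lt_one (by positivity) (inv_lt_one_of_one_lt₀ hc)

lemma SS_summable {β : ℝ} (hβ : 1 < β) {a : ℕ → ℝ} (ha : ∀ n, 0 ≤ a n ∧ a n ≤ 1) (p : ℕ) :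
    Summable fun n => (β⁻¹) ^ n * a n ^ p :=
  Summable.of_norm_bounded (geo_summable hβ)
    (fun n => term_bound (by linarith) le_rfl (ha n) p n)

lemma SS_ge_one {β : ℝ} (hβ : 1 < β) {a : ℕ → ℝ} (ha : ∀ n, 0 ≤ a n ∧ a n ≤ 1) (h0 : a 0 = 1)
    (p : ℕ) : 1 ≤ SS β a p := by
  have := (SS_summable hβ ha p).le_tsum 0 (fun n _ => by
    have := (ha n).1
    positivity)
  simpa [SS, h0] using this

lemma ga_tendsto (β : ℝ) (hβ : 0 < β) (n : ℕ) :
    Tendsto (fun b => ga b n) (𝓝[≥] β) (𝓝[≥] (ga β n)) := by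
  induction n with
  | zero =>
    simp only [ga]
    exact tendsto_nhdsWithin_iff.2 ⟨tendsto_const_nhds, by simp⟩
  | succ n ih =>
    obtain ⟨ih1, ih2⟩ := tendsto_nhdsWithin_iff.1 ih
    have hid : Tendsto (fun b : ℝ => b) (𝓝[≥] β) (𝓝 β) := tendsto_id.mono_left nhdsWithin_le_nhds
    have hm : Tendsto (fun b => b * ga b n) (𝓝[≥] β) (𝓝[≥] (β * ga β n)) := by
      refine tendsto_nhdsWithin_iff.2 ⟨hid.mul ih1, ?_⟩
      filter_upwards [ih2, self_mem_nhdsWithin] with b hb1 hb2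
      exact mul_le_mul hb2 hb1 (ga_mem _ _).1 (hβ.le.trans hb2)
    have hf := (tendsto_floor_right_pure_floor (β * ga β n)).comp hm
    rw [tendsto_pure] at hf
    obtain ⟨hm1, hm2⟩ := tendsto_nhdsWithin_iff.1 hm
    refine tendsto_nhdsWithin_iff.2 ⟨?_, ?_⟩
    · refine (hm1.sub_const (⌊β * ga β n⌋ : ℝ)).congr' ?_
      filter_upwards [hf] with b hb
      simp only [Function.comp] at hb
      simp only [ga, Int.fract, hb]
    · filter_upwards [hf, hm2] with b hb hb2
      simp only [Function.comp] at hb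
      simp only [Set.mem_Ici, ga, Int.fract, hb] at *
      linarith

lemma qa_tendsto (β : ℝ) (hβ : 0 < β) (n : ℕ) :
    Tendsto (fun b => qa b n) (𝓝[≤] β) (𝓝[≤] (qa β n)) := by
  induction n with
  | zero =>
    simp only [qa]
    exact tendsto_nhdsWithin_iff.2 ⟨tendsto_const_nhds, by simp⟩
  | succ n ih =>
    obtain ⟨ih1, ih2⟩ := tendsto_nhdsWithin_iff.1 ih
    have hid : Tendsto (fun b : ℝ => b) (𝓝[≤] β) (𝓝 β) := tendsto_id.mono_left nhdsWithin_le_nhds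
    have hm : Tendsto (fun b => b * qa b n) (𝓝[≤] β) (𝓝[≤] (β * qa β n)) := by
      refine tendsto_nhdsWithin_iff.2 ⟨hid.mul ih1, ?_⟩
      filter_upwards [ih2, self_mem_nhdsWithin] with b hb1 hb2
      exact mul_le_mul hb2 hb1 (qa_mem _ _).1 hβ.le
    have hf := (tendsto_ceil_left_pure_ceil (β * qa β n)).comp hm
    rw [tendsto_pure] at hf
    obtain ⟨hm1, hm2⟩ := tendsto_nhdsWithin_iff.1 hm
    refine tendsto_nhdsWithin_iff.2 ⟨?_, ?_⟩
    · refine (hm1.sub_const (⌈β * qa β n⌉ - 1 : ℝ)).congr' ?_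
      filter_upwards [hf] with b hb
      simp only [Function.comp] at hb
      simp only [qa, hb]
    · filter_upwards [hf, hm2] with b hb hb2
      simp only [Function.comp] at hb
      simp only [Set.mem_Iic, qa, hb] at *
      linarith

lemma SS_tendsto {β : ℝ} (hβ : 1 < β) {l : Filter ℝ} (hl : l ≤ 𝓝 β) (a : ℝ → ℕ → ℝ)
    (ha : ∀ b n, 0 ≤ a b n ∧ a b n ≤ 1) (h : ∀ n, Tendsto (fun b => a b n) l (𝓝 (a β n)))
    (p : ℕ) : Tendsto (fun b => SS b (a b) p) l (𝓝 (SS β (a β) p)) := by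
  have hid : Tendsto (fun b : ℝ => b) l (𝓝 β) := hl
  obtain ⟨c, hc1, hc2⟩ := exists_between hβ
  refine tendsto_tsum_of_dominated_convergence (geo_summable hc1) ?_ ?_
  · intro n
    exact ((hid.inv₀ (by linarith)).pow n).mul ((h n).pow p)
  · filter_upwards [hl (Ioi_mem_nhds hc2)] with b hb n
    exact term_bound (by linarith) (le_of_lt hb) (ha b n) p n

/-- mean of the Parry measure -/
noncomputable def Eg (β : ℝ) : ℝ := SS β (ga β) 2 / SS β (ga β) 1 / 2

lemma ga_eq_qa_of (β : ℝ) (N : ℕ) (h : ∀ n < N, ga β n ≠ 0) : ∀ n < N, ga β n = qa β n := by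
  intro n
  induction n with
  | zero => intro _; simp [ga, qa]
  | succ n ih =>
    intro hn
    have e := ih (by omega)
    have h1 := h _ hn
    simp only [ga, qa, ← e] at *
    have h2 := (Int.fract_eq_zero_or_add_one_sub_ceil (β * ga β n)).resolve_left h1
    rw [h2]; ring

lemma ga_zero_of (β : ℝ) (N : ℕ) (h : ga β N = 0) (k : ℕ) : ga β (N + k) = 0 := by
  induction k with
  | zero => exact h
  | succ k ih => rw [← add_assoc]; simp [ga, ih]

lemma qa_periodic (β : ℝ) (N : ℕ) (h : qa β N = 1) (k : ℕ) : qa β (N + k) = qa β k := by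
  induction k with
  | zero => simp [h, qa]
  | succ k ih => rw [← add_assoc]; simp [qa, ih]

lemma Eg_eq {β : ℝ} (hβ : 1 < β) : Eg β = SS β (qa β) 2 / SS β (qa β) 1 / 2 := by
  by_cases hz : ∃ N, ga β N = 0
  · classical
    let N := Nat.find hz
    have hN : ga β N = 0 := Nat.find_spec hz
    have hlt : ∀ n < N, ga β n ≠ 0 := fun n hn => Nat.find_min hz hn
    have heq := ga_eq_qa_of β N hlt
    have hN0 : N ≠ 0 := by
      intro h; rw [h] at hN; simp [ga] at hN
    obtain ⟨m, hm⟩ := Nat.exists_eq_succ_of_ne_zero hN0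
    have hq : qa β N = 1 := by
      rw [hm] at hN ⊢
      have e := heq m (by omega)
      simp only [Nat.succ_eq_add_one, ga, qa, ← e] at *
      obtain ⟨z, hz⟩ := Int.fract_eq_zero_iff.1 hN
      rw [← hz]; simp
    have key : ∀ p, p ≠ 0 → SS β (ga β) p = (1 - (β⁻¹) ^ N) * SS β (qa β) p := by
      intro p hp
      have e1 := (SS_summable hβ (ga_mem β) p).sum_add_tsum_nat_add N
      have e2 := (SS_summable hβ (qa_mem β) p).sum_add_tsum_nat_add N
      have e3 : ∑' i, (β⁻¹) ^ (i + N) * ga β (i + N) ^ p = 0 := by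
        simp [add_comm _ N, ga_zero_of β N hN, hp]
      have e4 : ∑' i, (β⁻¹) ^ (i + N) * qa β (i + N) ^ p = (β⁻¹) ^ N * SS β (qa β) p := by
        rw [SS, ← tsum_mul_left]
        congr 1; ext i
        rw [add_comm i N, qa_periodic β N hq, pow_add]; ring
      have e5 : ∑ i ∈ Finset.range N, (β⁻¹) ^ i * ga β i ^ p
          = ∑ i ∈ Finset.range N, (β⁻¹) ^ i * qa β i ^ p :=
        Finset.sum_congr rfl fun i hi => by rw [heq i (Finset.mem_range.1 hi)]
      rw [e3] at e1; rw [e4] at e2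
      change _ = SS β (ga β) p at e1
      change _ = SS β (qa β) p at e2
      linarith
    have hne : (1 - (β⁻¹) ^ N) ≠ 0 := by
      have := pow_lt_one₀ (by positivity : 0 ≤ β⁻¹) (inv_lt_one_of_one_lt₀ hβ) hN0
      linarith
    rw [Eg, key 2 (by norm_num), key 1 (by norm_num), mul_div_mul_left _ _ hne]
  · push Not at hz
    have : ga β = qa β := by
      ext n
      exact ga_eq_qa_of β (n+1) (fun n _ => hz n) n (by omega)
    rw [Eg, this]

lemma Eg_cont {β : ℝ} (hβ : 1 < β) : ContinuousAt Eg β := by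
  rw [continuousAt_iff_continuous_left'_right']
  have hl : ContinuousWithinAt Eg (Set.Iic β) β := by
    have hk : ∀ p, Tendsto (fun b => SS b (qa b) p) (𝓝[≤] β) (𝓝 (SS β (qa β) p)) := fun p =>
      SS_tendsto hβ nhdsWithin_le_nhds qa qa_mem
        (fun n => (qa_tendsto β (by linarith) n).mono_right nhdsWithin_le_nhds) p
    have h1 := SS_ge_one hβ (qa_mem β) rfl 1
    have := ((hk 2).div (hk 1) (by linarith)).div_const 2
    rw [ContinuousWithinAt, Eg_eq hβ]
    refine this.congr' ?_
    filter_upwards [nhdsWithin_le_nhds (Ioi_mem_nhds hβ)] with b hb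
    rw [Eg_eq hb]; rfl
  have hr : ContinuousWithinAt Eg (Set.Ici β) β := by
    have hk : ∀ p, Tendsto (fun b => SS b (ga b) p) (𝓝[≥] β) (𝓝 (SS β (ga β) p)) := fun p =>
      SS_tendsto hβ nhdsWithin_le_nhds ga ga_mem
        (fun n => (ga_tendsto β (by linarith) n).mono_right nhdsWithin_le_nhds) p
    have h1 := SS_ge_one hβ (ga_mem β) rfl 1
    exact ((hk 2).div (hk 1) (by linarith)).div_const 2
  exact ⟨hl.mono Set.Iio_subset_Iic_self, hr.mono Set.Ioi_subset_Ici_self⟩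

lemma Eg_pos {β : ℝ} (hβ : 1 < β) : 0 < Eg β := by
  have h1 := SS_ge_one hβ (ga_mem β) rfl 1
  have h2 := SS_ge_one hβ (ga_mem β) rfl 2
  unfold Eg; positivity

lemma Eg_three : Eg 3 = 1 / 2 := by
  have h : ∀ n, ga 3 (n + 1) = 0 := by
    intro n
    have := ga_zero_of 3 1 (by simp [ga]) n
    rwa [add_comm] at this
  have hs : ∀ p, p ≠ 0 → SS 3 (ga 3) p = 1 := by
    intro p hp
    rw [SS, (SS_summable (by norm_num) (ga_mem 3) p).tsum_eq_zero_add]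
    simp only [h, zero_pow hp, mul_zero, tsum_zero]
    simp [ga]
  rw [Eg, hs 1 (by norm_num), hs 2 (by norm_num)]; norm_num

lemma Eg_half_lt : Eg (5/2) < 1 / 2 := by
  have hβ : (1:ℝ) < 5/2 := by norm_num
  have h1 := SS_ge_one hβ (ga_mem (5/2)) rfl 1
  have : SS (5/2) (ga (5/2)) 2 < SS (5/2) (ga (5/2)) 1 := by
    refine (SS_summable hβ (ga_mem _) 2).tsum_lt_tsum (i := 1) ?_ ?_ (SS_summable hβ (ga_mem _) 1)
    · intro n
      have := ga_mem (5/2) n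
      have : ga (5/2) n ^ 2 ≤ ga (5/2) n ^ 1 := by nlinarith
      dsimp only
      gcongr
    · have : ga (5/2) 1 = 1/2 := by
        simp only [ga]
        rw [show (5/2 * 1 : ℝ) = 1/2 + (2:ℤ) by norm_num, Int.fract_add_intCast]
        exact Int.fract_eq_self.2 (by norm_num)
      rw [this]; norm_num
  have : SS (5/2) (ga (5/2)) 2 / SS (5/2) (ga (5/2)) 1 < 1 := by
    rw [div_lt_one (by linarith)]; exact this
  unfold Eg; linarith
open Filter Topology
open scoped ENNReal

lemma vol_fract_nat (s : Set ℝ) (hs : MeasurableSet s) (d : ℕ) (r : ℝ) (hr0 : 0 ≤ r) (hr1 : r < 1) :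
    volume (Set.Ico 0 (d + r) ∩ Int.fract ⁻¹' s)
      = d * volume (Set.Ico 0 1 ∩ s) + volume (Set.Ico 0 r ∩ s) := by
  induction d with
  | zero =>
    simp only [Nat.cast_zero, zero_add, zero_mul]
    congr 1; ext x
    simp only [Set.mem_inter_iff, Set.mem_Ico, Set.mem_preimage]
    refine and_congr_right fun h => ?_
    rw [Int.fract_eq_self.2 ⟨h.1, h.2.trans hr1⟩]
  | succ d ih =>
    have hsplit : Set.Ico (0:ℝ) ((d + 1 : ℕ) + r) ∩ Int.fract ⁻¹' s
        = (Set.Ico 0 1 ∩ s) ∪ (fun x => -1 + x) ⁻¹' (Set.Ico 0 (d + r) ∩ Int.fract ⁻¹' s) := by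
      ext x
      have hf : Int.fract (-1 + x) = Int.fract x := by
        rw [show (-1 + x) = x - 1 by ring, Int.fract_sub_one]
      simp only [Set.mem_inter_iff, Set.mem_Ico, Set.mem_preimage, Set.mem_union, hf]
      push_cast
      have hd : (0:ℝ) ≤ d := Nat.cast_nonneg d
      constructor
      · rintro ⟨⟨h1, h2⟩, h3⟩
        by_cases hx : x < 1
        · left
          rw [Int.fract_eq_self.2 ⟨h1, hx⟩] at h3
          exact ⟨⟨h1, hx⟩, h3⟩
        · right
          exact ⟨⟨by linarith, by linarith⟩, h3⟩
      · rintro (⟨⟨h1, h2⟩, h3⟩ | ⟨⟨h1, h2⟩, h3⟩)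
        · rw [Int.fract_eq_self.2 ⟨h1, h2⟩]
          exact ⟨⟨h1, by linarith⟩, h3⟩
        · exact ⟨⟨by linarith, by linarith⟩, h3⟩
    rw [hsplit, measure_union, measure_preimage_add, ih]
    · push_cast; ring
    · rw [Set.disjoint_left]
      rintro x ⟨h1, _⟩ ⟨h2, _⟩
      simp only [Set.mem_Ico] at h1 h2
      linarith
    · exact (measurableSet_Ico.inter (measurable_fract hs)).preimage (measurable_const_add _)

lemma vol_push (β : ℝ) (hβ : 0 < β) (a : ℝ) (ha : 0 ≤ a) (s : Set ℝ) (hs : MeasurableSet s) :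
    volume.restrict (Set.Ico 0 a) ((fun x => Int.fract (β * x)) ⁻¹' s)
      = ENNReal.ofReal β⁻¹ * (ENNReal.ofReal ⌊β * a⌋ * volume (Set.Ico 0 1 ∩ s)
        + volume (Set.Ico 0 (Int.fract (β * a)) ∩ s)) := by
  have hm : Measurable fun x : ℝ => Int.fract (β * x) := measurable_fract.comp (measurable_const_mul β)
  rw [Measure.restrict_apply (hm hs)]
  have h0 : 0 ≤ β * a := by positivity
  have e : (fun x => Int.fract (β * x)) ⁻¹' s ∩ Set.Ico 0 a
      = (fun x => β * x) ⁻¹' (Set.Ico 0 (β * a) ∩ Int.fract ⁻¹' s) := by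
    ext x
    simp only [Set.mem_inter_iff, Set.mem_Ico, Set.mem_preimage, mul_nonneg_iff_of_pos_left hβ,
      mul_lt_mul_iff_right₀ hβ]
    tauto
  rw [e, Real.volume_preimage_mul_left hβ.ne', abs_of_pos (inv_pos.2 hβ)]
  congr 1
  obtain ⟨d, hd⟩ := Int.eq_ofNat_of_zero_le (Int.floor_nonneg.2 h0)
  have hd' : β * a = d + Int.fract (β * a) := by
    rw [Int.fract, hd]; simp
  have := vol_fract_nat s hs d _ (Int.fract_nonneg (β * a)) (Int.fract_lt_one _)
  rw [← hd'] at this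
  rw [this, hd]; simp

lemma lebI_eq : lebI = volume.restrict (Set.Ico 0 1) :=
  (Measure.restrict_congr_set Ico_ae_eq_Icc).symm

lemma int_Ico (a : ℝ) (ha : 0 ≤ a) : ∫ x in Set.Ico 0 a, x = a ^ 2 / 2 := by
  rw [integral_Ico_eq_integral_Ioc, ← intervalIntegral.integral_of_le ha, integral_id]; ring

lemma Emu_lebI : Emu lebI = 1 / 2 := by
  rw [Emu, lebI, Measure.restrict_restrict measurableSet_Icc, Set.inter_self, ← lebI, lebI_eq,
    int_Ico 1 (by norm_num)]
  norm_num

lemma leb_inv : Measure.map (fun x => Int.fract (2 * x)) lebI = lebI := by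
  have hm : Measurable fun x : ℝ => Int.fract (2 * x) := measurable_fract.comp (measurable_const_mul 2)
  ext s hs
  rw [Measure.map_apply hm hs, lebI_eq, vol_push 2 (by norm_num) 1 (by norm_num) s hs,
    Measure.restrict_apply hs, Set.inter_comm s]
  have : ⌊(2 * 1 : ℝ)⌋ = 2 := by norm_num
  have h2 : Int.fract (2 * 1 : ℝ) = 0 := by rw [Int.fract, this]; norm_num
  rw [this, h2]
  simp only [Set.Ico_self, Set.empty_inter, measure_empty, add_zero]
  rw [← mul_assoc, ← ENNReal.ofReal_mul (by norm_num)]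
  norm_num

/-- unnormalised Parry measure -/
noncomputable def nuP (β : ℝ) : Measure ℝ :=
  Measure.sum fun n => (ENNReal.ofReal ((β⁻¹) ^ n)) • volume.restrict (Set.Ico 0 (ga β n))

lemma digits_sum {β : ℝ} (hβ : 1 < β) :
    ∑' n, ENNReal.ofReal ((β⁻¹) ^ (n + 1) * ⌊β * ga β n⌋) = 1 := by
  have hb : β ≠ 0 := by linarith
  have hnn : ∀ n, 0 ≤ (β⁻¹) ^ (n + 1) * (⌊β * ga β n⌋ : ℝ) := by
    intro n
    have h1 : 0 ≤ β * ga β n := mul_nonneg (by linarith) (ga_mem β n).1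
    have : (0:ℝ) ≤ ⌊β * ga β n⌋ := by exact_mod_cast Int.floor_nonneg.2 h1
    positivity
  have hs : HasSum (fun n => (β⁻¹) ^ (n + 1) * (⌊β * ga β n⌋ : ℝ)) 1 := by
    rw [hasSum_iff_tendsto_nat_of_nonneg hnn]
    have hp : ∀ n, ∑ i ∈ Finset.range n, (β⁻¹) ^ (i + 1) * (⌊β * ga β i⌋ : ℝ)
        = 1 - (β⁻¹) ^ n * ga β n ^ 1 := by
      intro n
      induction n with
      | zero => simp [ga]
      | succ n ih =>
        rw [Finset.sum_range_succ, ih]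
        simp only [ga, Int.fract, pow_succ]
        field_simp
        ring
    simp only [hp]
    simpa using (SS_summable hβ (ga_mem β) 1).tendsto_atTop_zero.const_sub 1
  rw [← ENNReal.ofReal_tsum_of_nonneg hnn hs.summable, hs.tsum_eq, ENNReal.ofReal_one]

lemma nuP_apply (β : ℝ) (s : Set ℝ) (hs : MeasurableSet s) :
    nuP β s = ∑' n, ENNReal.ofReal ((β⁻¹) ^ n) * volume (Set.Ico 0 (ga β n) ∩ s) := by
  rw [nuP, Measure.sum_apply _ hs]
  simp [Measure.restrict_apply hs, Set.inter_comm s]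

lemma nuP_term {β : ℝ} (hβ : 1 < β) (s : Set ℝ) (hs : MeasurableSet s) (n : ℕ) :
    ENNReal.ofReal ((β⁻¹) ^ n) * volume (Set.Ico 0 (ga β n) ∩ (fun x => Int.fract (β * x)) ⁻¹' s)
      = ENNReal.ofReal ((β⁻¹) ^ (n + 1) * ⌊β * ga β n⌋) * volume (Set.Ico 0 1 ∩ s)
        + ENNReal.ofReal ((β⁻¹) ^ (n + 1)) * volume (Set.Ico 0 (ga β (n + 1)) ∩ s) := by
  have hm : Measurable fun x : ℝ => Int.fract (β * x) := measurable_fract.comp (measurable_const_mul β)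
  have hb0 : 0 ≤ β⁻¹ := by positivity
  have h := vol_push β (by linarith) _ (ga_mem β n).1 s hs
  rw [Measure.restrict_apply (hm hs), Set.inter_comm] at h
  have e : ga β (n + 1) = Int.fract (β * ga β n) := rfl
  rw [h, e, ENNReal.ofReal_mul (pow_nonneg hb0 (n + 1)), pow_succ,
    ENNReal.ofReal_mul (pow_nonneg hb0 n)]
  generalize volume (Set.Ico 0 1 ∩ s) = A
  generalize volume (Set.Ico 0 (Int.fract (β * ga β n)) ∩ s) = B
  generalize ENNReal.ofReal (β⁻¹ ^ n) = C
  generalize ENNReal.ofReal (⌊β * ga β n⌋ : ℝ) = D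
  generalize ENNReal.ofReal (β⁻¹) = G
  ring

lemma nuP_inv {β : ℝ} (hβ : 1 < β) :
    Measure.map (fun x => Int.fract (β * x)) (nuP β) = nuP β := by
  have hm : Measurable fun x : ℝ => Int.fract (β * x) := measurable_fract.comp (measurable_const_mul β)
  refine Measure.ext fun s hs => ?_
  rw [Measure.map_apply hm hs, nuP_apply β s hs, nuP_apply β _ (hm hs)]
  rw [tsum_congr (nuP_term hβ s hs), ENNReal.tsum_add, ENNReal.tsum_mul_right, digits_sum hβ,
    tsum_eq_zero_add' (f := fun n => ENNReal.ofReal ((β⁻¹) ^ n) * volume (Set.Ico 0 (ga β n) ∩ s))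
      ENNReal.summable]
  have e : ga β 0 = 1 := rfl
  rw [e, pow_zero, ENNReal.ofReal_one]

lemma nuP_univ {β : ℝ} (hβ : 1 < β) : nuP β Set.univ = ENNReal.ofReal (SS β (ga β) 1) := by
  have hb0 : 0 ≤ β⁻¹ := by positivity
  rw [nuP_apply β _ MeasurableSet.univ, SS, ENNReal.ofReal_tsum_of_nonneg]
  · congr 1; ext n
    rw [Set.inter_univ, Real.volume_Ico, ENNReal.ofReal_mul (by positivity)]; simp
  · intro n; have := (ga_mem β n).1; positivity
  · exact SS_summable hβ (ga_mem β) 1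

lemma nuP_int {β : ℝ} (hβ : 1 < β) :
    ∫ x in Set.Icc (0:ℝ) 1, x ∂(nuP β) = SS β (ga β) 2 / 2 := by
  have hb0 : 0 ≤ β⁻¹ := by positivity
  have : IsFiniteMeasure (nuP β) := ⟨by rw [nuP_univ hβ]; exact ENNReal.ofReal_lt_top⟩
  have hint : Integrable (fun x : ℝ => x) ((nuP β).restrict (Set.Icc 0 1)) := by
    refine Integrable.of_bound (C := 1) (by fun_prop) ?_
    filter_upwards [ae_restrict_mem measurableSet_Icc] with x hx
    rw [Real.norm_of_nonneg hx.1]; exact hx.2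
  have hr : (nuP β).restrict (Set.Icc 0 1) = nuP β := by
    rw [nuP, Measure.restrict_sum _ measurableSet_Icc]
    congr 1; ext1 n
    rw [Measure.restrict_smul, Measure.restrict_restrict measurableSet_Icc,
      Set.inter_eq_self_of_subset_right]
    exact Set.Ico_subset_Icc_self.trans (Set.Icc_subset_Icc_right (ga_mem β n).2)
  rw [hr] at hint ⊢
  rw [nuP] at hint ⊢
  rw [integral_sum_measure hint, SS, ← tsum_div_const]
  congr 1; ext n
  rw [integral_smul_measure, int_Ico _ (ga_mem β n).1, ENNReal.toReal_ofReal (by positivity),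
    smul_eq_mul]
  ring

lemma exists_parry {β : ℝ} (hβ : 1 < β) : ∃ μ : Measure ℝ, IsProbabilityMeasure μ ∧ μ ≪ lebI ∧
    lebI ≪ μ ∧ Emu μ = Eg β ∧ Measure.map (fun x => Int.fract (β * x)) μ = μ := by
  have hb0 : 0 < β⁻¹ := by positivity
  have hK := SS_ge_one hβ (ga_mem β) rfl 1
  set K := SS β (ga β) 1 with hKdef
  have hm : Measurable fun x : ℝ => Int.fract (β * x) := measurable_fract.comp (measurable_const_mul β)
  have hne : ENNReal.ofReal K⁻¹ ≠ 0 := by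
    have : 0 < K⁻¹ := by positivity
    simpa using this
  have hac : nuP β ≪ lebI := by
    rw [nuP, lebI_eq]
    refine Measure.absolutelyContinuous_sum_left fun n => ?_
    exact (Measure.restrict_mono (Set.Ico_subset_Ico_right (ga_mem β n).2)
      le_rfl).absolutelyContinuous.smul_left _
  have hca : lebI ≪ nuP β := by
    rw [nuP, lebI_eq]
    refine Measure.absolutelyContinuous_sum_right 0 ?_
    simp [ga]
    exact Measure.AbsolutelyContinuous.rfl
  refine ⟨ENNReal.ofReal K⁻¹ • nuP β, ⟨?_⟩, hac.smul_left _, ?_, ?_, ?_⟩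
  · rw [Measure.smul_apply, nuP_univ hβ, ← hKdef, smul_eq_mul, ← ENNReal.ofReal_mul (by positivity),
      inv_mul_cancel₀ (by linarith), ENNReal.ofReal_one]
  · exact hca.trans (Measure.absolutelyContinuous_smul hne)
  · rw [Emu, Measure.restrict_smul, integral_smul_measure, nuP_int hβ,
      ENNReal.toReal_ofReal (by positivity), Eg, smul_eq_mul, ← hKdef]
    ring
  · rw [Measure.map_smul, nuP_inv hβ]

/-- For strong self-consistency, at least two acims exist: Lebesgue and a measure
equivalent to, but different from, Lebesgue. -/
theorem stmt2 (F : ℝ → ℝ) (hF : ContDiff ℝ 1 F) (hF0 : F 0 = 0)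
    (hFpos : ∀ x : ℝ, x ≠ 0 → 0 < F x)
    (hF' : ∃ C > 0, ∃ x₀ ∈ Set.Ioo (0:ℝ) 1, ∀ x : ℝ, 0 < x → x < x₀ →
      |deriv F x| ≤ C / |Real.log x|) :
    ∃ ε₂ > (0:ℝ), ∀ ε : ℝ, ε₂ ≤ ε →
      Measure.map (Tsc ε F lebI) lebI = lebI ∧
      ∃ μ : Measure ℝ, IsProbabilityMeasure μ ∧ μ ≪ lebI ∧ lebI ≪ μ ∧ μ ≠ lebI ∧
        Measure.map (Tsc ε F μ) μ = μ := by
  have hE := Eg_half_lt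
  have hEp := Eg_pos (β := 5/2) (by norm_num)
  have hx : 1 / Eg (5/2) - 2 ≠ 0 := by
    have : 2 < 1 / Eg (5/2) := by rw [lt_div_iff₀ hEp]; linarith
    linarith
  have hG := hFpos _ hx
  set G := F (1 / Eg (5/2) - 2) with hGdef
  refine ⟨1 / G, by positivity, fun ε hε => ⟨?_, ?_⟩⟩
  · have : Tsc ε F lebI = fun x => Int.fract (2 * x) := by
      ext x; simp [Tsc, Emu_lebI, hF0]
    rw [this, leb_inv]
  · have hεG : 1 ≤ ε * G := by rwa [div_le_iff₀ hG] at hε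
    have hc : ContinuousOn (fun b => 2 + ε * F (1 / Eg b - 2) - b) (Set.Icc (5/2) 3) := by
      intro b hb
      have hb1 : 1 < b := by linarith [hb.1]
      have h1 : ContinuousAt (fun b => 1 / Eg b - 2) b :=
        (continuousAt_const.div (Eg_cont hb1) (Eg_pos hb1).ne').sub continuousAt_const
      have h2 : ContinuousAt (fun b => F (1 / Eg b - 2)) b :=
        ContinuousAt.comp (g := F) hF.continuous.continuousAt h1
      exact ((continuousAt_const.add (continuousAt_const.mul h2)).sub
        continuousAt_id).continuousWithinAt
    have := intermediate_value_Icc' (by norm_num : (5/2 : ℝ) ≤ 3) hc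
    obtain ⟨b, hb, hb0⟩ := this (show (0:ℝ) ∈ _ from by
      rw [Set.mem_Icc, Eg_three, ← hGdef]
      norm_num [hF0]
      linarith)
    dsimp only at hb0
    have hb1 : 1 < b := by linarith [hb.1]
    obtain ⟨μ, h1, h2, h3, h4, h5⟩ := exists_parry hb1
    refine ⟨μ, h1, h2, h3, ?_, ?_⟩
    · rintro rfl
      rw [← h4, Emu_lebI] at hb0
      norm_num [hF0] at hb0
      linarith [hb.1]
    · have : Tsc ε F μ = fun x => Int.fract (b * x) := by
        ext x
        rw [Tsc, h4, show 2 + ε * F (1 / Eg b - 2) = b by linarith]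
      rw [this, h5]
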